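/- Let X be a complex Banach space and let (T(t))_{t≥0} be a bounded strongly continuous semigroup on X whose generator A satisfies σ(A) ∩ iℝ = ∅. Suppose M : [0, ∞) → (0, ∞) is a continuous non-decreasing function with M(s) → ∞ as s → ∞ such that limsup_{|s|→∞} ‖(is − A)^{−1}‖ / M(|s|) > 0. Then there exists c > 0 such that limsup_{t→∞} M^{−1}(ct)·‖T(t)A^{−1}‖ > 0, where M^{−1}(t) = sup{s ≥ 0 : M(s) ≤ t} is the right-continuous right-inverse of M. If, in addition, M has positive increase, then this conclusion holds for every c > 0. -/

import Mathlib

noncomputable section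

open Complex Set Filter
open scoped Topology

namespace NUS

variable {X : Type*} [NormedAddCommGroup X] [NormedSpace ℂ X] [CompleteSpace X]

/-- A strongly continuous (one-parameter) semigroup of bounded operators on `X`. -/
structure IsC0Semigroup (T : ℝ → X →L[ℂ] X) : Prop where
  map_zero : T 0 = 1
  map_add : ∀ ⦃s t : ℝ⦄, 0 ≤ s → 0 ≤ t → T (s + t) = (T s).comp (T t)
  strongly_continuous : ∀ x : X, ContinuousOn (fun t => T t x) (Ici (0 : ℝ))

/-- `A` is the infinitesimal generator of the semigroup `T`. -/
def IsGenerator (A : X →ₗ.[ℂ] X) (T : ℝ → X →L[ℂ] X) : Prop :=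
  ∀ x y : X,
    (∃ hx : x ∈ A.domain, A ⟨x, hx⟩ = y) ↔
      Tendsto (fun t : ℝ => (t : ℂ)⁻¹ • (T t x - x)) (𝓝[>] (0 : ℝ)) (𝓝 y)

/-- `R` is the resolvent operator `(lam - A)⁻¹` of `A` at `lam`; in particular `lam`
belongs to the resolvent set of `A`. -/
def IsResolvent (A : X →ₗ.[ℂ] X) (lam : ℂ) (R : X →L[ℂ] X) : Prop :=
  (∀ y : X, ∃ h : R y ∈ A.domain, lam • R y - A ⟨R y, h⟩ = y) ∧
  (∀ x : A.domain, R (lam • (x : X) - A x) = (x : X))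

/-- The right-continuous right-inverse `M⁻¹(t) = sup { s ≥ 0 : M(s) ≤ t }` of a
non-decreasing function `M`. -/
def Minv (M : ℝ → ℝ) (t : ℝ) : ℝ :=
  sSup {s : ℝ | 0 ≤ s ∧ M s ≤ t}

/-- `M` has positive increase: there are `α > 0`, `c ∈ (0,1]` and `s₀ > 0` such that
`M(λ s) / M(s) ≥ c λ^α` for all `λ ≥ 1` and `s ≥ s₀`. -/
def HasPositiveIncrease (M : ℝ → ℝ) : Prop :=
  ∃ α : ℝ, 0 < α ∧ ∃ c : ℝ, 0 < c ∧ c ≤ 1 ∧ ∃ s₀ : ℝ, 0 < s₀ ∧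
    ∀ lam : ℝ, 1 ≤ lam → ∀ s : ℝ, s₀ ≤ s → c * lam ^ α ≤ M (lam * s) / M s

end NUS


namespace NUS

/-- The orbit of a point of the domain is right differentiable. -/
lemma orbit_deriv {X : Type*} [NormedAddCommGroup X] [NormedSpace ℂ X]
    (T : ℝ → X →L[ℂ] X) (A : X →ₗ.[ℂ] X)
    (hT : IsC0Semigroup T) (hgen : IsGenerator A T) (x : A.domain) (r : ℝ) (hr : 0 ≤ r) :
    HasDerivWithinAt (fun t => T t (x : X)) (T r (A x)) (Ici r) r := by
  rw [← hasDerivWithinAt_Ioi_iff_Ici,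
    hasDerivWithinAt_iff_tendsto_slope' (by simp)]
  have h1 := (hgen x (A x)).1 ⟨x.2, rfl⟩
  have h2 : Tendsto (fun t : ℝ => t - r) (𝓝[>] r) (𝓝[>] 0) := by
    apply tendsto_nhdsWithin_of_tendsto_nhds_of_eventually_within
    · have : Tendsto (fun t : ℝ => t - r) (𝓝 r) (𝓝 (r - r)) :=
        (continuous_id.sub continuous_const).tendsto r
      rw [sub_self] at this
      exact this.mono_left nhdsWithin_le_nhds
    · filter_upwards [self_mem_nhdsWithin] with t ht
      simpa using ht
  have h3 := (((T r).continuous.tendsto (A x)).comp h1).comp h2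
  refine h3.congr' ?_
  filter_upwards [self_mem_nhdsWithin] with t ht
  have ht' : r < t := ht
  have h4 : T t = (T r).comp (T (t - r)) := by
    rw [← hT.map_add hr (by linarith)]
    congr 1
    ring
  simp only [Function.comp_apply, slope_def_module, map_smul, map_sub]
  rw [h4, ContinuousLinearMap.comp_apply, ← Complex.ofReal_inv, Complex.coe_smul]

lemma key_bound {X : Type*} [NormedAddCommGroup X] [NormedSpace ℂ X]
    (T : ℝ → X →L[ℂ] X) (A : X →ₗ.[ℂ] X)
    (hT : IsC0Semigroup T) (hgen : IsGenerator A T) (K : ℝ)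
    (hK : ∀ t : ℝ, 0 ≤ t → ‖T t‖ ≤ K) (s t : ℝ) (ht : 0 ≤ t) (x : A.domain) :
    ‖(x : X)‖ ≤ ‖T t (x : X)‖ + K * t * ‖(Complex.I * s) • (x : X) - A x‖ := by
  have hE : ∀ r : ℝ, ‖Complex.exp (-(Complex.I * s) * r)‖ = 1 := by
    intro r
    have : -(Complex.I * s) * r = ((-(s * r) : ℝ) : ℂ) * Complex.I := by push_cast; ring
    rw [this, Complex.norm_exp_ofReal_mul_I]
  have hEd : ∀ r : ℝ, HasDerivAt (fun r : ℝ => Complex.exp (-(Complex.I * s) * r))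
      (Complex.exp (-(Complex.I * s) * r) * (-(Complex.I * s))) r := by
    intro r
    have h0 : HasDerivAt (fun r : ℝ => -(Complex.I * s) * (r : ℂ)) (-(Complex.I * s)) r := by
      simpa using (Complex.ofRealCLM.hasDerivAt (x := r)).const_mul (-(Complex.I * (s : ℂ)))
    exact h0.cexp
  have := norm_image_sub_le_of_norm_deriv_right_le_segment
    (f := fun r : ℝ => Complex.exp (-(Complex.I * s) * r) • T r (x : X))
    (f' := fun r : ℝ => Complex.exp (-(Complex.I * s) * r) • T r (A x) +
      (Complex.exp (-(Complex.I * s) * r) * (-(Complex.I * s))) • T r (x : X))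
    (a := 0) (b := t) (C := K * ‖(Complex.I * s) • (x : X) - A x‖)
    ?_ ?_ ?_ t ⟨ht, le_rfl⟩
  · simp only [hT.map_zero] at this
    simp only [Complex.ofReal_zero, mul_zero, Complex.exp_zero, one_smul,
      ContinuousLinearMap.one_apply, sub_zero] at this
    have h1 : ‖Complex.exp (-(Complex.I * s) * t) • T t (x : X)‖ = ‖T t (x : X)‖ := by
      rw [norm_smul, hE, one_mul]
    have h2 := norm_sub_norm_le (x : X) (Complex.exp (-(Complex.I * s) * t) • T t (x : X))
    rw [norm_sub_rev, h1] at h2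
    nlinarith
  · apply ContinuousOn.smul
    · fun_prop
    · exact (hT.strongly_continuous x).mono Icc_subset_Ici_self
  · intro r hr
    exact (hEd r).hasDerivWithinAt.smul (orbit_deriv T A hT hgen x r hr.1)
  · intro r hr
    have : Complex.exp (-(Complex.I * s) * r) • T r (A x) +
      (Complex.exp (-(Complex.I * s) * r) * (-(Complex.I * s))) • T r (x : X) =
      - (Complex.exp (-(Complex.I * s) * r) • T r ((Complex.I * s) • (x : X) - A x)) := by
      rw [map_sub, map_smul, mul_smul, smul_sub, neg_smul, smul_neg]
      abel
    simp only [this]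
    rw [norm_neg, norm_smul, hE, one_mul]
    exact (T r).le_of_opNorm_le (hK r hr.1) _

lemma bddAbove_Minv (M : ℝ → ℝ) (hMinf : Tendsto M atTop atTop) (t : ℝ) :
    BddAbove {s : ℝ | 0 ≤ s ∧ M s ≤ t} := by
  obtain ⟨b, hb⟩ := (hMinf.eventually_gt_atTop t).exists_forall_of_atTop
  refine ⟨b, fun s hs => ?_⟩
  by_contra! h
  exact absurd hs.2 (not_le.2 (hb s h.le))

lemma resolvent_bound {X : Type*} [NormedAddCommGroup X] [NormedSpace ℂ X]
    (T : ℝ → X →L[ℂ] X) (A : X →ₗ.[ℂ] X)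
    (hT : IsC0Semigroup T) (hgen : IsGenerator A T) (K : ℝ) (hK0 : 0 ≤ K)
    (hK : ∀ t : ℝ, 0 ≤ t → ‖T t‖ ≤ K) (R0 : X →L[ℂ] X) (hR0 : IsResolvent A 0 R0)
    (s t : ℝ) (ht : 0 ≤ t) (hs : |s| * ‖(T t).comp R0‖ ≤ 1 / 2)
    (R : X →L[ℂ] X) (hR : IsResolvent A (Complex.I * s) R) :
    ‖R‖ ≤ 2 * K * (‖R0‖ + t) := by
  refine R.opNorm_le_bound (by positivity) fun y => ?_
  obtain ⟨hy, hy2⟩ := hR.1 y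
  have h1 := key_bound T A hT hgen K hK s t ht ⟨R y, hy⟩
  simp only [hy2] at h1
  have h2 := hR0.2 ⟨R y, hy⟩
  simp only [zero_smul, zero_sub] at h2
  have h3 : ‖T t (R y)‖ ≤ ‖(T t).comp R0‖ * ‖A ⟨R y, hy⟩‖ := by
    have := ((T t).comp R0).le_opNorm (-A ⟨R y, hy⟩)
    rwa [ContinuousLinearMap.comp_apply, h2, norm_neg] at this
  have h4 : ‖A ⟨R y, hy⟩‖ ≤ |s| * ‖R y‖ + ‖y‖ := by
    have : A ⟨R y, hy⟩ = (Complex.I * s) • R y - y := by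
      nth_rewrite 3 [← hy2]
      abel
    rw [this]
    refine (norm_sub_le _ _).trans ?_
    rw [norm_smul]
    simp
  have h5 : ‖(T t).comp R0‖ ≤ K * ‖R0‖ :=
    ((T t).opNorm_comp_le R0).trans (by gcongr; exact hK t ht)
  have h6 := mul_le_mul_of_nonneg_left h4 (norm_nonneg ((T t).comp R0))
  have h7 := mul_le_mul_of_nonneg_right hs (norm_nonneg (R y))
  have h8 := mul_le_mul_of_nonneg_right h5 (norm_nonneg y)
  nlinarith

lemma Minv_compare (M : ℝ → ℝ) (hMpos : ∀ s : ℝ, 0 ≤ s → 0 < M s)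
    (hMinf : Tendsto M atTop atTop) (hM : HasPositiveIncrease M) (c₁ c : ℝ) (hc₁ : 0 < c₁)
    (hc : 0 < c) : ∃ L : ℝ, 0 < L ∧ ∃ t₁ : ℝ, ∀ t : ℝ, t₁ ≤ t →
      Minv M (c₁ * t) ≤ L * Minv M (c * t) := by
  obtain ⟨α, hα, c', hc', -, s₀, hs₀, h⟩ := hM
  obtain ⟨L, hL1, hL⟩ := ((eventually_ge_atTop (1 : ℝ)).and
    ((tendsto_rpow_atTop hα).eventually_ge_atTop (c₁ / c / c'))).exists
  have hLp : 0 < L := by linarith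
  refine ⟨L, hLp, M s₀ / c, fun t ht => ?_⟩
  have ht2 : M s₀ ≤ c * t := by
    rw [div_le_iff₀ hc] at ht
    linarith
  have hs₀M : s₀ ≤ Minv M (c * t) := le_csSup (bddAbove_Minv M hMinf _) ⟨hs₀.le, ht2⟩
  refine Real.sSup_le (fun s hs => ?_) (by nlinarith)
  rw [← div_le_iff₀' hLp]
  by_cases h0 : s₀ ≤ s / L
  · refine le_csSup (bddAbove_Minv M hMinf _) ⟨by linarith, ?_⟩
    have h1 := h L hL1 (s / L) h0
    rw [mul_div_cancel₀ _ hLp.ne', le_div_iff₀ (hMpos _ (by linarith))] at h1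
    have hp := hMpos (s / L) (by linarith)
    have h2 : c₁ / c ≤ c' * L ^ α := by
      rw [div_le_iff₀ hc'] at hL
      linarith
    have h3 : c₁ / c * M (s / L) ≤ c₁ * t :=
      (mul_le_mul_of_nonneg_right h2 hp.le).trans (h1.trans hs.2)
    rw [div_mul_eq_mul_div, div_le_iff₀ hc] at h3
    exact le_of_mul_le_mul_left (by linarith) hc₁
  · linarith

end NUS

open NUS in
/-- Proposition 5.4.  Let `T` be a bounded `C₀`-semigroup on a
complex Banach space `X` whose generator `A` satisfies `σ(A) ∩ iℝ = ∅`, and let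
`M : [0, ∞) → (0, ∞)` be continuous, non-decreasing, with `M(s) → ∞`, such that
`limsup_{|s| → ∞} ‖(i s - A)⁻¹‖ / M(|s|) > 0`.  Then there exists `c > 0` with
`limsup_{t → ∞} M⁻¹(c t) ‖T(t) A⁻¹‖ > 0`; and if `M` has positive increase, this
holds for every `c > 0`.  (Here `A⁻¹ = -(0 - A)⁻¹` has the same norm as `(0 - A)⁻¹`,
so `T(t) ∘ R₀` is used, where `R₀ = (0 - A)⁻¹`.) -/
theorem stmt18
    {X : Type*} [NormedAddCommGroup X] [NormedSpace ℂ X] [CompleteSpace X]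
    (T : ℝ → X →L[ℂ] X) (A : X →ₗ.[ℂ] X)
    (hT : IsC0Semigroup T) (hgen : IsGenerator A T)
    (hbdd : ∃ K : ℝ, ∀ t : ℝ, 0 ≤ t → ‖T t‖ ≤ K)
    (hspec : ∀ s : ℝ, ∃ R : X →L[ℂ] X, IsResolvent A (Complex.I * s) R)
    (R0 : X →L[ℂ] X) (hR0 : IsResolvent A 0 R0)
    (M : ℝ → ℝ)
    (hMpos : ∀ s : ℝ, 0 ≤ s → 0 < M s)
    (hMcont : ContinuousOn M (Ici (0 : ℝ)))
    (hMmono : MonotoneOn M (Ici (0 : ℝ)))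
    (hMinf : Tendsto M atTop atTop)
    (hlimsup : ∃ c : ℝ, 0 < c ∧ ∀ n : ℝ, ∃ s : ℝ, n ≤ |s| ∧
      ∀ R : X →L[ℂ] X, IsResolvent A (Complex.I * s) R → c * M |s| ≤ ‖R‖) :
    (∃ c : ℝ, 0 < c ∧ ∃ ε : ℝ, 0 < ε ∧ ∀ t₀ : ℝ, ∃ t : ℝ, t₀ ≤ t ∧
      ε ≤ Minv M (c * t) * ‖(T t).comp R0‖) ∧
    (HasPositiveIncrease M → ∀ c : ℝ, 0 < c → ∃ ε : ℝ, 0 < ε ∧ ∀ t₀ : ℝ,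
      ∃ t : ℝ, t₀ ≤ t ∧ ε ≤ Minv M (c * t) * ‖(T t).comp R0‖) := by
  have part1 : ∃ c : ℝ, 0 < c ∧ ∃ ε : ℝ, 0 < ε ∧ ∀ t₀ : ℝ, ∃ t : ℝ, t₀ ≤ t ∧
      ε ≤ Minv M (c * t) * ‖(T t).comp R0‖ := by
    obtain ⟨K', hK'⟩ := hbdd
    obtain ⟨K, hK0, hK⟩ : ∃ K : ℝ, 0 < K ∧ ∀ t : ℝ, 0 ≤ t → ‖T t‖ ≤ K :=
      ⟨max K' 1, by positivity, fun t ht => (hK' t ht).trans (le_max_left _ _)⟩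
    obtain ⟨c₀, hc₀, hlim⟩ := hlimsup
    have hcp : 0 < 4 * K / c₀ := by positivity
    refine ⟨4 * K / c₀, hcp, 1 / 2, by norm_num, fun t₀ => ?_⟩
    obtain ⟨n, hn⟩ := ((hMinf.eventually_ge_atTop (4 * K / c₀ * t₀)).and
      (hMinf.eventually_gt_atTop (4 * K * ‖R0‖ / c₀))).exists_forall_of_atTop
    obtain ⟨s, hs, hsR⟩ := hlim n
    obtain ⟨hM1, hM2⟩ := hn |s| hs
    have hMp := hMpos |s| (abs_nonneg s)
    refine ⟨M |s| / (4 * K / c₀), ?_, ?_⟩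
    · rw [le_div_iff₀ hcp]
      linarith
    · rw [mul_div_cancel₀ _ hcp.ne']
      by_contra! hlt
      obtain ⟨R, hR⟩ := hspec s
      have hsM : |s| ≤ Minv M (M |s|) :=
        le_csSup (bddAbove_Minv M hMinf _) ⟨abs_nonneg s, le_rfl⟩
      have h1 := resolvent_bound T A hT hgen K hK0.le hK R0 hR0 s (M |s| / (4 * K / c₀))
        (by positivity)
        ((mul_le_mul_of_nonneg_right hsM (norm_nonneg _)).trans hlt.le) R hR
      have h2 := hsR R hR
      rw [div_lt_iff₀ hc₀] at hM2
      have h3 : 2 * K * (‖R0‖ + M |s| / (4 * K / c₀)) = 2 * K * ‖R0‖ + c₀ * M |s| / 2 := by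
        field_simp
        ring
      linarith
  refine ⟨part1, fun hM c hc => ?_⟩
  obtain ⟨c₁, hc₁, ε, hε, h⟩ := part1
  obtain ⟨L, hL, t₁, hcomp⟩ := Minv_compare M hMpos hMinf hM c₁ c hc₁ hc
  refine ⟨ε / L, by positivity, fun t₀ => ?_⟩
  obtain ⟨t, ht, hle⟩ := h (max t₀ t₁)
  refine ⟨t, (le_max_left _ _).trans ht, ?_⟩
  rw [div_le_iff₀ hL]
  have := mul_le_mul_of_nonneg_right (hcomp t ((le_max_right _ _).trans ht))
    (norm_nonneg ((T t).comp R0))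
  linarith
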